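/- For every integer n ≥ 1, the polynomial Y_n(x,y;z1,z2,z3,z4) defined below is invariant under exchanging its first and third boundary parameters and under exchanging its second and fourth boundary parameters: Y_n(x,y;z1,z2,z3,z4) = Y_n(x,y;z3,z2,z1,z4) = Y_n(x,y;z1,z4,z3,z2), as identities of polynomials in ℤ[x,y,z1,z2,z3,z4]. -/

import Mathlib

open Finset

/-- The `n × n` integer matrix encoded by `e`, with entries in `{-1, 0, 1}`. -/
def asmMat {n : ℕ} (e : Fin n → Fin n → Fin 3) : Fin n → Fin n → ℤ :=
  fun i j => (e i j : ℤ) - 1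

/-- `A` is an alternating sign matrix: all entries lie in `{-1, 0, 1}`, every
partial row sum and every partial column sum is `0` or `1` (equivalently, the
nonzero entries of each row and of each column alternate in sign), and every
complete row sum and column sum is `1`. -/
def IsASM {n : ℕ} (A : Fin n → Fin n → ℤ) : Prop :=
  (∀ i j, A i j = -1 ∨ A i j = 0 ∨ A i j = 1) ∧
  (∀ (i j : Fin n), (∑ j' ∈ univ.filter (fun j' : Fin n => j' ≤ j), A i j') = 0 ∨
    (∑ j' ∈ univ.filter (fun j' : Fin n => j' ≤ j), A i j') = 1) ∧
  (∀ (i j : Fin n), (∑ i' ∈ univ.filter (fun i' : Fin n => i' ≤ i), A i' j) = 0 ∨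
    (∑ i' ∈ univ.filter (fun i' : Fin n => i' ≤ i), A i' j) = 1) ∧
  (∀ i : Fin n, (∑ j, A i j) = 1) ∧
  (∀ j : Fin n, (∑ i, A i j) = 1)

/-- `ν(A)`, the number of generalized inversions of `A`. -/
def nuASM {n : ℕ} (A : Fin n → Fin n → ℤ) : ℕ :=
  (∑ i : Fin n, ∑ i' : Fin n, ∑ j : Fin n, ∑ j' : Fin n,
      if i < i' ∧ j' ≤ j then A i j * A i' j' else 0).toNat

/-- `μ(A)`, the number of entries of `A` equal to `-1`. -/
def muASM {n : ℕ} (A : Fin n → Fin n → ℤ) : ℕ :=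
  (univ.filter (fun p : Fin n × Fin n => A p.1 p.2 = -1)).card

/-- `ρT(A)`, the number of `0`'s to the left of the `1` in the top row of `A`. -/
def rhoT {n : ℕ} (A : Fin n → Fin n → ℤ) : ℕ :=
  (univ.filter (fun j : Fin n =>
    A ⟨0, j.pos⟩ j = 0 ∧ ∃ j' : Fin n, j < j' ∧ A ⟨0, j.pos⟩ j' = 1)).card

/-- `ρR(A)`, the number of `0`'s below the `1` in the right-most column of `A`. -/
def rhoR {n : ℕ} (A : Fin n → Fin n → ℤ) : ℕ :=
  (univ.filter (fun i : Fin n =>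
    A i ⟨n - 1, Nat.sub_lt i.pos Nat.one_pos⟩ = 0 ∧
      ∃ i' : Fin n, i' < i ∧ A i' ⟨n - 1, Nat.sub_lt i.pos Nat.one_pos⟩ = 1)).card

/-- `ρB(A)`, the number of `0`'s to the right of the `1` in the bottom row of `A`. -/
def rhoB {n : ℕ} (A : Fin n → Fin n → ℤ) : ℕ :=
  (univ.filter (fun j : Fin n =>
    A ⟨n - 1, Nat.sub_lt j.pos Nat.one_pos⟩ j = 0 ∧
      ∃ j' : Fin n, j' < j ∧ A ⟨n - 1, Nat.sub_lt j.pos Nat.one_pos⟩ j' = 1)).card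

/-- `ρL(A)`, the number of `0`'s above the `1` in the left-most column of `A`. -/
def rhoL {n : ℕ} (A : Fin n → Fin n → ℤ) : ℕ :=
  (univ.filter (fun i : Fin n =>
    A i ⟨0, i.pos⟩ = 0 ∧ ∃ i' : Fin n, i < i' ∧ A i' ⟨0, i.pos⟩ = 1)).card

open Classical in
/-- The quadruply-refined ASM generating function
`Zqua_n(x,y;z1,z2,z3,z4) = Σ_A x^{ν(A)} y^{μ(A)} z1^{ρT(A)} z2^{ρR(A)} z3^{ρB(A)} z4^{ρL(A)}`. -/
noncomputable def Zqua (n : ℕ) {R : Type*} [CommRing R] (x y z1 z2 z3 z4 : R) : R :=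
  ∑ e : Fin n → Fin n → Fin 3,
    if IsASM (asmMat e) then
      x ^ nuASM (asmMat e) * y ^ muASM (asmMat e) * z1 ^ rhoT (asmMat e) *
        z2 ^ rhoR (asmMat e) * z3 ^ rhoB (asmMat e) * z4 ^ rhoL (asmMat e)
    else 0

/-- Adjacent-boundary doubly-refined generating function `Zadj_n(x,y;z1,z2)`. -/
noncomputable def Zadj (n : ℕ) {R : Type*} [CommRing R] (x y z1 z2 : R) : R :=
  Zqua n x y z1 1 1 z2

/-- Alternative adjacent-boundary doubly-refined generating function `Zbaradj_n(x,y;z1,z2)`. -/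
noncomputable def Zbaradj (n : ℕ) {R : Type*} [CommRing R] (x y z1 z2 : R) : R :=
  Zqua n x y z1 z2 1 1

/-- Triply-refined generating function `Ztri_n(x,y;z1,z2,z3)`. -/
noncomputable def Ztri (n : ℕ) {R : Type*} [CommRing R] (x y z1 z2 z3 : R) : R :=
  Zqua n x y z1 1 z2 z3

/-- Opposite-boundary doubly-refined generating function `Zopp_n(x,y;z1,z2)`. -/
noncomputable def Zopp (n : ℕ) {R : Type*} [CommRing R] (x y z1 z2 : R) : R :=
  Zqua n x y z1 1 z2 1

/-- Singly-refined generating function `Z_n(x,y;z)`. -/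
noncomputable def Zsing (n : ℕ) {R : Type*} [CommRing R] (x y z : R) : R :=
  Zqua n x y z 1 1 1

/-- Unrefined generating function `Z_n(x,y)`.  Note `Zun 0 x y = 1`. -/
noncomputable def Zun (n : ℕ) {R : Type*} [CommRing R] (x y : R) : R :=
  Zqua n x y 1 1 1 1

/-- The top-left corner entry `A_{1,1}` of `A` (which is `0` or `1` for an ASM),
as a natural number. -/
def cornerTL {n : ℕ} (A : Fin n → Fin n → ℤ) : ℕ :=
  if h : 0 < n then (A ⟨0, h⟩ ⟨0, h⟩).toNat else 0

/-- The top-right corner entry `A_{1,n}` of `A`, as a natural number. -/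
def cornerTR {n : ℕ} (A : Fin n → Fin n → ℤ) : ℕ :=
  if h : 0 < n then (A ⟨0, h⟩ ⟨n - 1, Nat.sub_lt h Nat.one_pos⟩).toNat else 0

/-- The bottom-right corner entry `A_{n,n}` of `A`, as a natural number. -/
def cornerBR {n : ℕ} (A : Fin n → Fin n → ℤ) : ℕ :=
  if h : 0 < n then
    (A ⟨n - 1, Nat.sub_lt h Nat.one_pos⟩ ⟨n - 1, Nat.sub_lt h Nat.one_pos⟩).toNat
  else 0

/-- The bottom-left corner entry `A_{n,1}` of `A`, as a natural number. -/
def cornerBL {n : ℕ} (A : Fin n → Fin n → ℤ) : ℕ :=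
  if h : 0 < n then (A ⟨n - 1, Nat.sub_lt h Nat.one_pos⟩ ⟨0, h⟩).toNat else 0

open Classical in
/-- The polynomial `Y_n(x,y;z1,z2,z3,z4)`. -/
noncomputable def Ypoly (n : ℕ) {R : Type*} [CommRing R] (x y z1 z2 z3 z4 : R) : R :=
  ∑ e : Fin n → Fin n → Fin 3,
    if IsASM (asmMat e) then
      x ^ nuASM (asmMat e) *
      y ^ (muASM (asmMat e) + cornerTL (asmMat e) + cornerTR (asmMat e) +
            cornerBR (asmMat e) + cornerBL (asmMat e)) *
      z1 ^ (rhoT (asmMat e) + cornerTL (asmMat e) - 1) *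
      z2 ^ (rhoR (asmMat e) + cornerBR (asmMat e) - 1) *
      z3 ^ (rhoB (asmMat e) + cornerBR (asmMat e) - 1) *
      z4 ^ (rhoL (asmMat e) + cornerTL (asmMat e) - 1) *
      (y * z4 * z1 - (z4 - 1) * (z1 - 1)) ^ (1 - cornerTL (asmMat e)) *
      (y - x * (z1 - 1) * (z2 - 1)) ^ (1 - cornerTR (asmMat e)) *
      (y * z2 * z3 - (z2 - 1) * (z3 - 1)) ^ (1 - cornerBR (asmMat e)) *
      (y - x * (z3 - 1) * (z4 - 1)) ^ (1 - cornerBL (asmMat e))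
    else 0

section SixVertex

variable {S : Type*} [CommRing S]

/-- The sum of the entries of `f` strictly before position `i`. -/
def prefixSum {G : Type*} [AddCommMonoid G] {n : ℕ} (f : Fin n → G) (i : Fin n) : G :=
  ∑ k ∈ Iio i, f k

lemma prefixSum_zero {G : Type*} [AddCommMonoid G] {n : ℕ} (f : Fin (n + 1) → G) :
    prefixSum f 0 = 0 := by
  have : Iio (0 : Fin (n + 1)) = ∅ := by ext k; simp
  simp [prefixSum, this]

lemma prefixSum_succ {G : Type*} [AddCommMonoid G] {n : ℕ} (f : Fin (n + 1) → G) (i : Fin n) :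
    prefixSum f i.succ = f 0 + prefixSum (fun k => f k.succ) i := by
  have h : ∀ {m : ℕ} (g : Fin m → G) (k : Fin m),
      prefixSum g k = ∑ l, if l < k then g l else 0 := by
    intro m g k
    rw [prefixSum, ← Finset.sum_filter]
    congr 1
    ext; simp
  rw [h, h, Fin.sum_univ_succ]
  simp

/-- The value `-1`, `0` or `1` encoded by an element of `Fin 3`. -/
def stepVal (e : Fin 3) : ℤ := (e : ℤ) - 1

/-- An edge state as an integer `0` or `1`. -/
def edgeVal (b : Bool) : ℤ := if b then 1 else 0

/-- The matrix entry which takes the edge state `v` to the edge state `v'`. -/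
def edgeStep (v v' : Bool) : Fin 3 :=
  if v = v' then 1 else if v' then 2 else 0

/-- Off-diagonal product weight of the six-vertex model. -/
def cWeight (x y z : S) : S := (z - 1) * (x * z - 1) + y * z

/-- Six-vertex weight of an entry `e` with incoming horizontal and vertical edge values `h`, `v`. -/
def vertexWeight (x y z w : S) (h v : ℤ) (e : Fin 3) : S :=
  if e = 2 then (if h = 0 ∧ v = 0 then y else 0)
  else if e = 0 then (if h = 1 ∧ v = 1 then cWeight x y z * cWeight x y w else 0)
  else if h = 0 ∧ v = 0 then x * (y * z * w - (z - 1) * (w - 1))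
  else if h = 1 ∧ v = 1 then y * z * w - (z - 1) * (w - 1)
  else if h = 0 ∧ v = 1 ∨ h = 1 ∧ v = 0 then y - x * (z - 1) * (w - 1)
  else 0

/-- The local `L`-operator, acting on the horizontal edge. -/
def lOp (x y z w : S) (v v' : Bool) : Matrix Bool Bool S :=
  Matrix.of fun h h' =>
    if edgeVal h' = edgeVal h + stepVal (edgeStep v v') then
      vertexWeight x y z w (edgeVal h) (edgeVal v) (edgeStep v v') else 0

/-- The row-to-row transfer matrix with domain wall boundary conditions on the two sides. -/
def transferMatrix {n : ℕ} (x y : S) (w : Fin n → S) (z : S) :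
    Matrix (Fin n → Bool) (Fin n → Bool) S :=
  Matrix.of fun b b' => (List.ofFn fun j => lOp x y z (w j) (b j) (b' j)).prod false true

/-- The `R`-matrix intertwining two rows with parameters `z` and `z'`. -/
def rMatrix (x y z z' : S) : Matrix (Bool × Bool) (Bool × Bool) S :=
  Matrix.of fun p q =>
    if p = q then
      (if p = (false, true) then cWeight x y z'
        else if p = (true, false) then cWeight x y z
        else x * z * z' - (1 + x - y) * z + 1)
    else if p = (false, true) ∧ q = (true, false) then z' - z
    else if p = (true, false) ∧ q = (false, true) then x * (z' - z)
    else 0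

set_option maxHeartbeats 2000000 in
open Kronecker in
lemma two_row_intertwine (x y z z' w : S) (v v' : Bool) :
    (∑ m, lOp x y z w v m ⊗ₖ lOp x y z' w m v') * rMatrix x y z z' =
      rMatrix x y z z' * ∑ m, lOp x y z' w v m ⊗ₖ lOp x y z w m v' := by
  ext ⟨p1, p2⟩ ⟨q1, q2⟩
  cases v <;> cases v' <;> cases p1 <;> cases p2 <;> cases q1 <;> cases q2 <;>
    simp [Matrix.mul_apply, Fintype.sum_prod_type, Matrix.add_apply, lOp, rMatrix, vertexWeight,
      edgeVal, stepVal, edgeStep, cWeight] <;> ring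

lemma list_prod_intertwine {ι : Type*} [Fintype ι] [DecidableEq ι] {n : ℕ}
    (M N : Fin n → Matrix ι ι S) (R : Matrix ι ι S) (h : ∀ j, M j * R = R * N j) :
    (List.ofFn M).prod * R = R * (List.ofFn N).prod := by
  induction n with
  | zero => simp
  | succ n ih =>
    simp only [List.ofFn_succ, List.prod_cons]
    rw [mul_assoc, ih _ _ fun j => h j.succ, ← mul_assoc, h, mul_assoc]

lemma list_prod_ofFn_sum {A ι : Type*} [Semiring A] [Fintype ι] {n : ℕ}
    (g : Fin n → ι → A) :
    (List.ofFn fun j => ∑ m, g j m).prod =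
      ∑ p : Fin n → ι, (List.ofFn fun j => g j (p j)).prod := by
  induction n with
  | zero => simp
  | succ n ih =>
    rw [← (Fin.consEquiv fun _ => ι).sum_comp, Fintype.sum_prod_type]
    simp only [List.ofFn_succ, List.prod_cons, ih, Fin.consEquiv_apply, Fin.cons_zero,
      Fin.cons_succ, Finset.sum_mul_sum]

open Kronecker in
lemma list_prod_kronecker {ι : Type*} [Fintype ι] [DecidableEq ι] {n : ℕ}
    (M N : Fin n → Matrix ι ι S) :
    (List.ofFn fun j => M j ⊗ₖ N j).prod = (List.ofFn M).prod ⊗ₖ (List.ofFn N).prod := by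
  induction n with
  | zero => simp
  | succ n ih =>
    simp only [List.ofFn_succ, List.prod_cons, ih, Matrix.mul_kronecker_mul]

open Kronecker in
lemma transferMatrix_mul_apply {n : ℕ} (x y : S) (w : Fin n → S) (z z' : S)
    (b b' : Fin n → Bool) :
    (transferMatrix x y w z * transferMatrix x y w z') b b' =
      (List.ofFn fun j => ∑ m, lOp x y z (w j) (b j) m ⊗ₖ lOp x y z' (w j) m (b' j)).prod
        (false, false) (true, true) := by
  rw [list_prod_ofFn_sum, Matrix.mul_apply, Matrix.sum_apply]
  refine Finset.sum_congr rfl fun p _ => ?_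
  rw [list_prod_kronecker (fun j => lOp x y z (w j) (b j) (p j))
    (fun j => lOp x y z' (w j) (p j) (b' j))]
  rfl

lemma transferMatrix_comm [IsDomain S] {n : ℕ} (x y : S) (w : Fin n → S) (z z' : S)
    (h : x * z * z' - (1 + x - y) * z + 1 ≠ 0) :
    transferMatrix x y w z * transferMatrix x y w z' =
      transferMatrix x y w z' * transferMatrix x y w z := by
  ext b b'
  rw [transferMatrix_mul_apply, transferMatrix_mul_apply]
  have key := congrFun (congrFun (list_prod_intertwine _ _ (rMatrix x y z z')
    fun j : Fin n => two_row_intertwine x y z z' (w j) (b j) (b' j)) (false, false)) (true, true)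
  simp [Matrix.mul_apply, rMatrix] at key
  simp only [Fintype.sum_bool]
  rw [mul_comm] at key
  exact mul_left_cancel₀ h key

/-- The weight of a row with entries `e`, left edge value `h` and upper edge values `v`. -/
def rowWeight {n : ℕ} (x y z : S) (w : Fin n → S) (h : ℤ) (v : Fin n → ℤ) (e : Fin n → Fin 3) : S :=
  if h + ∑ j, stepVal (e j) = 1 then
    ∏ j, vertexWeight x y z (w j) (h + prefixSum (fun k => stepVal (e k)) j) (v j) (e j)
  else 0

lemma rowWeight_succ {n : ℕ} (x y z : S) (w : Fin (n + 1) → S) (h : ℤ) (v : Fin (n + 1) → ℤ)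
    (e : Fin (n + 1) → Fin 3) :
    rowWeight x y z w h v e = vertexWeight x y z (w 0) h (v 0) (e 0) *
      rowWeight x y z (fun j => w j.succ) (h + stepVal (e 0)) (fun j => v j.succ)
        (fun j => e j.succ) := by
  simp [rowWeight, Fin.sum_univ_succ, Fin.prod_univ_succ, prefixSum_zero, prefixSum_succ,
    add_assoc]

lemma sum_lOp_mul (x y z w : S) (v v' h : Bool) (F : ℤ → S) :
    ∑ h', lOp x y z w v v' h h' * F (edgeVal h') =
      vertexWeight x y z w (edgeVal h) (edgeVal v) (edgeStep v v') *
        F (edgeVal h + stepVal (edgeStep v v')) := by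
  cases v <;> cases v' <;> cases h <;>
    simp [lOp, vertexWeight, edgeVal, stepVal, edgeStep]

lemma list_prod_lOp {n : ℕ} (x y z : S) (w : Fin n → S) (h : Bool) (b b' : Fin n → Bool) :
    (List.ofFn fun j => lOp x y z (w j) (b j) (b' j)).prod h true =
      rowWeight x y z w (edgeVal h) (fun j => edgeVal (b j)) (fun j => edgeStep (b j) (b' j)) := by
  induction n generalizing h with
  | zero => cases h <;> simp [rowWeight, edgeVal]
  | succ n ih =>
    rw [rowWeight_succ, ← sum_lOp_mul x y z (w 0) (b 0) (b' 0) h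
      (fun k => rowWeight x y z (fun j => w j.succ) k (fun j => edgeVal (b j.succ))
        (fun j => edgeStep (b j.succ) (b' j.succ)))]
    simp only [List.ofFn_succ, List.prod_cons, Matrix.mul_apply]
    exact Finset.sum_congr rfl fun h' _ => by rw [ih]

lemma exists_edgeStep (x y z w : S) (h : ℤ) (v : Bool) (e : Fin 3)
    (hne : vertexWeight x y z w h (edgeVal v) e ≠ 0) : ∃ v', edgeStep v v' = e := by
  revert hne
  fin_cases e <;> cases v <;> simp [vertexWeight, edgeVal, edgeStep]

lemma edgeStep_injective (v : Bool) : Function.Injective (edgeStep v) := by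
  revert v; decide

lemma edgeVal_add_stepVal (v v' : Bool) : edgeVal v + stepVal (edgeStep v v') = edgeVal v' := by
  cases v <;> cases v' <;> simp [edgeVal, stepVal, edgeStep]

lemma sum_rowWeight_mul {n : ℕ} (x y z : S) (w : Fin n → S) (b : Fin n → Bool)
    (F : (Fin n → ℤ) → S) :
    ∑ e : Fin n → Fin 3, rowWeight x y z w 0 (fun j => edgeVal (b j)) e *
        F ((fun j => edgeVal (b j)) + fun j => stepVal (e j)) =
      ∑ b', transferMatrix x y w z b b' * F (fun j => edgeVal (b' j)) := by
  symm
  refine Fintype.sum_of_injective (fun (b' : Fin n → Bool) j => edgeStep (b j) (b' j))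
    (fun p q hpq => funext fun j => edgeStep_injective _ (congrFun hpq j)) _ _ ?_ ?_
  · intro e he
    by_contra hne
    refine he ?_
    have h1 := left_ne_zero_of_mul hne
    rw [rowWeight] at h1
    have h2 := (ite_ne_right_iff.mp h1).2
    choose b' hb' using fun j => exists_edgeStep x y z (w j) _ (b j) (e j)
      (fun h0 => h2 (Finset.prod_eq_zero (Finset.mem_univ j) h0))
    exact ⟨b', funext hb'⟩
  · intro b'
    have : ((fun j => edgeVal (b j)) + fun j => stepVal (edgeStep (b j) (b' j))) =
        fun j => edgeVal (b' j) := funext fun j => edgeVal_add_stepVal _ _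
    simp only [this, transferMatrix, Matrix.of_apply, list_prod_lOp]
    rfl

/-- The six-vertex partition function with top edge values `s` and bottom edge values `1`. -/
def partitionFn {m n : ℕ} (x y : S) (z : Fin m → S) (w : Fin n → S) (s : Fin n → ℤ) : S :=
  ∑ e : Fin m → Fin n → Fin 3,
    if s + ∑ i, (fun j => stepVal (e i j)) = 1 then
      ∏ i, rowWeight x y (z i) w 0 (s + prefixSum (fun k j => stepVal (e k j)) i) (e i)
    else 0

lemma partitionFn_succ {m n : ℕ} (x y : S) (z : Fin (m + 1) → S) (w : Fin n → S) (s : Fin n → ℤ) :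
    partitionFn x y z w s = ∑ e : Fin n → Fin 3, rowWeight x y (z 0) w 0 s e *
      partitionFn x y (fun i => z i.succ) w (s + fun j => stepVal (e j)) := by
  rw [partitionFn, ← (Fin.consEquiv fun _ => Fin n → Fin 3).sum_comp, Fintype.sum_prod_type]
  refine Finset.sum_congr rfl fun e _ => ?_
  rw [partitionFn, Finset.mul_sum]
  refine Finset.sum_congr rfl fun e' _ => ?_
  simp [Fin.sum_univ_succ, Fin.prod_univ_succ, prefixSum_zero, prefixSum_succ, add_assoc]

lemma partitionFn_eq {m n : ℕ} (x y : S) (z : Fin m → S) (w : Fin n → S) (b : Fin n → Bool) :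
    partitionFn x y z w (fun j => edgeVal (b j)) =
      (List.ofFn fun i => transferMatrix x y w (z i)).prod b (fun _ => true) := by
  induction m generalizing b with
  | zero =>
    have : ((fun j => edgeVal (b j)) = 1) ↔ b = fun _ => true := by
      simp only [funext_iff, edgeVal]
      refine forall_congr' fun j => ?_
      cases b j <;> simp
    simp [partitionFn, this, Matrix.one_apply]
  | succ m ih =>
    rw [partitionFn_succ, sum_rowWeight_mul]
    simp [List.ofFn_succ, Matrix.mul_apply, ih]

/-- The parameters `p`, `1`, …, `1`, `q`. -/
def boundaryParams {m : ℕ} (p q : S) : Fin (m + 2) → S :=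
  fun i => if i = 0 then p else if i = Fin.last (m + 1) then q else 1

lemma partitionFn_boundaryParams {m n : ℕ} (x y p q : S) (w : Fin n → S) :
    partitionFn x y (boundaryParams p q : Fin (m + 2) → S) w 0 =
      (transferMatrix x y w p * transferMatrix x y w 1 ^ m * transferMatrix x y w q)
        (fun _ => false) (fun _ => true) := by
  have h := partitionFn_eq x y (boundaryParams p q : Fin (m + 2) → S) w (fun _ => false)
  have h0 : (fun _ : Fin n => edgeVal false) = 0 := rfl
  rw [h0] at h
  rw [h, List.ofFn_succ, List.prod_cons, List.ofFn_succ', List.concat_eq_append, List.prod_append,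
    mul_assoc]
  have : (fun i : Fin m => transferMatrix x y w (boundaryParams p q i.castSucc.succ)) =
      fun _ => transferMatrix x y w 1 := by
    funext i
    have : i.castSucc.succ ≠ Fin.last (m + 1) := by
      simp [Fin.ext_iff]; omega
    simp [boundaryParams, this]
  rw [this]
  simp [boundaryParams]

lemma partitionFn_boundaryParams_swap [IsDomain S] {m n : ℕ} (x y p q : S) (w : Fin n → S)
    (hp : x * p * 1 - (1 + x - y) * p + 1 ≠ 0) (hq : x * q * 1 - (1 + x - y) * q + 1 ≠ 0)
    (hpq : x * p * q - (1 + x - y) * p + 1 ≠ 0) :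
    partitionFn x y (boundaryParams p q : Fin (m + 2) → S) w 0 =
      partitionFn x y (boundaryParams q p : Fin (m + 2) → S) w 0 := by
  rw [partitionFn_boundaryParams, partitionFn_boundaryParams]
  have h1 : Commute (transferMatrix x y w p) (transferMatrix x y w 1) :=
    transferMatrix_comm x y w p 1 hp
  have h2 : Commute (transferMatrix x y w q) (transferMatrix x y w 1) :=
    transferMatrix_comm x y w q 1 hq
  have h3 : Commute (transferMatrix x y w p) (transferMatrix x y w q) :=
    transferMatrix_comm x y w p q hpq
  rw [(h1.pow_right m).eq, mul_assoc, h3.eq, ← mul_assoc, ← (h2.pow_right m).eq]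

end SixVertex

section SixVertexASM

variable {S : Type*} [CommRing S]

lemma vertexWeight_symm (x y z w : S) (h v : ℤ) (e : Fin 3) :
    vertexWeight x y z w h v e = vertexWeight x y w z v h e := by
  simp only [vertexWeight]
  split_ifs <;> first | ring1 | (exfalso; grind)

lemma sum_filter_le_eq {n : ℕ} (f : Fin n → ℤ) (j : Fin n) :
    ∑ k ∈ univ.filter (fun k : Fin n => k ≤ j), f k = prefixSum f j + f j := by
  have : univ.filter (fun k : Fin n => k ≤ j) = insert j (Iio j) := by
    ext k; simp [le_iff_eq_or_lt]
  rw [this, Finset.sum_insert (by simp), prefixSum, add_comm]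

lemma prefixSum_eq_zero_or_one {n : ℕ} (f : Fin n → ℤ)
    (hf : ∀ j, prefixSum f j + f j = 0 ∨ prefixSum f j + f j = 1) (j : Fin n) :
    prefixSum f j = 0 ∨ prefixSum f j = 1 := by
  cases n with
  | zero => exact j.elim0
  | succ n =>
    refine Fin.cases (Or.inl (prefixSum_zero f)) (fun i => ?_) j
    have h : prefixSum f i.succ = prefixSum f i.castSucc + f i.castSucc := by
      rw [← sum_filter_le_eq, prefixSum]
      congr 1
      ext k
      simp [Fin.lt_def, Fin.le_def]
    rw [h]
    exact hf _

lemma prefixSum_last {n : ℕ} (f : Fin (n + 1) → ℤ) :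
    prefixSum f (Fin.last n) + f (Fin.last n) = ∑ j, f j := by
  rw [← sum_filter_le_eq]
  congr 1
  ext k
  simp [Fin.le_last]

lemma prefixSum_indicator {n : ℕ} (k j : Fin n) :
    prefixSum (fun l => if l = k then (1 : ℤ) else 0) j = if k < j then 1 else 0 := by
  simp [prefixSum]

/-- The sum of the entries of row `i` strictly to the left of column `j`. -/
def hSum {n : ℕ} (e : Fin n → Fin n → Fin 3) (i j : Fin n) : ℤ :=
  prefixSum (fun k => stepVal (e i k)) j

/-- The sum of the entries of column `j` strictly above row `i`. -/
def vSum {n : ℕ} (e : Fin n → Fin n → Fin 3) (i j : Fin n) : ℤ :=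
  prefixSum (fun k => stepVal (e k j)) i

/-- The sum over alternating sign matrices of the products of their vertex weights. -/
noncomputable def asmSum {n : ℕ} (x y : S) (z w : Fin n → S) : S :=
  open Classical in
  ∑ e : Fin n → Fin n → Fin 3,
    if IsASM (asmMat e) then
      ∏ i, ∏ j, vertexWeight x y (z i) (w j) (hSum e i j) (vSum e i j) (e i j)
    else 0

lemma stepVal_cases (e : Fin 3) :
    e = 0 ∧ stepVal e = -1 ∨ e = 1 ∧ stepVal e = 0 ∨ e = 2 ∧ stepVal e = 1 := by
  fin_cases e <;> simp [stepVal]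

lemma edge_of_vertexWeight_ne_zero (x y z w : S) (h v : ℤ) (e : Fin 3)
    (hne : vertexWeight x y z w h v e ≠ 0) :
    (h + stepVal e = 0 ∨ h + stepVal e = 1) ∧ (v + stepVal e = 0 ∨ v + stepVal e = 1) := by
  revert hne
  contrapose
  intro hc
  simp only [vertexWeight]
  rcases stepVal_cases e with ⟨rfl, h1⟩ | ⟨rfl, h1⟩ | ⟨rfl, h1⟩ <;> rw [h1] at hc <;>
    simp only [Fin.isValue, Fin.reduceEq, if_true, if_false, ite_eq_right_iff] <;> grind

lemma isASM_iff {n : ℕ} (e : Fin n → Fin n → Fin 3) :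
    IsASM (asmMat e) ↔
      (∀ i j, hSum e i j + stepVal (e i j) = 0 ∨ hSum e i j + stepVal (e i j) = 1) ∧
      (∀ i j, vSum e i j + stepVal (e i j) = 0 ∨ vSum e i j + stepVal (e i j) = 1) ∧
      (∀ i, ∑ j, stepVal (e i j) = 1) ∧ ∀ j, ∑ i, stepVal (e i j) = 1 := by
  have h0 : ∀ i j, asmMat e i j = stepVal (e i j) := fun _ _ => rfl
  have h1 : ∀ i j, stepVal (e i j) = -1 ∨ stepVal (e i j) = 0 ∨ stepVal (e i j) = 1 := by
    intro i j
    rcases stepVal_cases (e i j) with h | h | h <;> simp [h.2]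
  simp only [IsASM, h0, h1, implies_true, true_and, sum_filter_le_eq, hSum, vSum]

lemma asmSum_eq_partitionFn {n : ℕ} (x y : S) (z w : Fin n → S) :
    asmSum x y z w = partitionFn x y z w 0 := by
  classical
  rw [asmSum, partitionFn]
  refine Finset.sum_congr rfl fun e _ => ?_
  have hv : ∀ i j, (prefixSum (fun k j => stepVal (e k j)) i) j = vSum e i j := by
    intro i j
    simp [prefixSum, vSum, Finset.sum_apply]
  have hcol : ((0 : Fin n → ℤ) + ∑ i, (fun j => stepVal (e i j)) = 1) ↔
      ∀ j, ∑ i, stepVal (e i j) = 1 := by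
    simp [funext_iff, Finset.sum_apply]
  simp only [hcol]
  simp only [rowWeight, zero_add, hv]
  by_cases hA : IsASM (asmMat e)
  · obtain ⟨-, -, hr, hc⟩ := (isASM_iff e).1 hA
    simp only [hA, hr, hc, implies_true, if_true]
    rfl
  · rw [if_neg hA]
    by_contra hne
    obtain ⟨hc, hp⟩ := ite_ne_right_iff.mp (Ne.symm hne)
    have hrow : ∀ i, _ := fun i => ite_ne_right_iff.mp
      (fun h0 => hp (Finset.prod_eq_zero (Finset.mem_univ i) h0))
    have hcell : ∀ i j, _ := fun i j => edge_of_vertexWeight_ne_zero x y _ _ _ _ _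
      (fun h0 => (hrow i).2 (Finset.prod_eq_zero (Finset.mem_univ j) h0))
    exact hA ((isASM_iff e).2 ⟨fun i j => (hcell i j).1, fun i j => (hcell i j).2,
      fun i => (hrow i).1, hc⟩)

lemma asmSum_symm {n : ℕ} (x y : S) (z w : Fin n → S) :
    asmSum x y z w = asmSum x y w z := by
  classical
  rw [asmSum, asmSum, ← (Equiv.piComm fun _ _ : Fin n => Fin 3).sum_comp]
  refine Finset.sum_congr rfl fun e _ => ?_
  have h1 : ∀ i j, hSum (Equiv.piComm (fun _ _ : Fin n => Fin 3) e) i j = vSum e j i :=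
    fun _ _ => rfl
  have h2 : ∀ i j, vSum (Equiv.piComm (fun _ _ : Fin n => Fin 3) e) i j = hSum e j i :=
    fun _ _ => rfl
  have h3 : ∀ i j, Equiv.piComm (fun _ _ : Fin n => Fin 3) e i j = e j i := fun _ _ => rfl
  have hA : IsASM (asmMat (Equiv.piComm (fun _ _ : Fin n => Fin 3) e)) ↔ IsASM (asmMat e) := by
    rw [isASM_iff, isASM_iff]
    simp only [h1, h2, h3]
    constructor <;> rintro ⟨a, b, c, d⟩ <;>
      exact ⟨fun i j => b j i, fun i j => a j i, d, c⟩
  simp only [hA]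
  refine if_congr Iff.rfl ?_ rfl
  rw [Finset.prod_comm]
  refine Finset.prod_congr rfl fun i _ => Finset.prod_congr rfl fun j _ => ?_
  rw [vertexWeight_symm]
  rfl

lemma asmSum_boundaryParams_swap [IsDomain S] {m : ℕ} (x y p q : S) (w : Fin (m + 2) → S)
    (hp : x * p * 1 - (1 + x - y) * p + 1 ≠ 0) (hq : x * q * 1 - (1 + x - y) * q + 1 ≠ 0)
    (hpq : x * p * q - (1 + x - y) * p + 1 ≠ 0) :
    asmSum x y (boundaryParams p q) w = asmSum x y (boundaryParams q p) w := by
  rw [asmSum_eq_partitionFn, asmSum_eq_partitionFn,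
    partitionFn_boundaryParams_swap x y p q w hp hq hpq]

end SixVertexASM

section BoundaryStatistics

lemma exists_eq_indicator {n : ℕ} (u : Fin n → ℤ) (h01 : ∀ j, u j = 0 ∨ u j = 1)
    (hsum : ∑ j, u j = 1) : ∃ k, u = fun j => if j = k then 1 else 0 := by
  have hk : ∃ k, u k = 1 := by
    by_contra! hne
    have : ∀ j, u j = 0 := fun j => (h01 j).resolve_right (hne j)
    simp [this] at hsum
  obtain ⟨k, hk⟩ := hk
  have h := Finset.add_sum_erase univ u (Finset.mem_univ k)
  have h0 : ∑ j ∈ univ.erase k, u j = 0 := by linarith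
  rw [Finset.sum_eq_zero_iff_of_nonneg fun j _ => by rcases h01 j with h | h <;> simp [h]] at h0
  refine ⟨k, funext fun j => ?_⟩
  split_ifs with hj
  · rw [hj, hk]
  · exact h0 j (by simp [hj])

variable {n m : ℕ}

lemma IsASM.edges {e : Fin n → Fin n → Fin 3} (hA : IsASM (asmMat e)) (i j : Fin n) :
    (hSum e i j = 0 ∨ hSum e i j = 1) ∧ (vSum e i j = 0 ∨ vSum e i j = 1) :=
  ⟨prefixSum_eq_zero_or_one _ (((isASM_iff e).1 hA).1 i) j,
    prefixSum_eq_zero_or_one _ (fun k => ((isASM_iff e).1 hA).2.1 k j) i⟩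

lemma IsASM.entry_cases {e : Fin n → Fin n → Fin 3} (hA : IsASM (asmMat e)) (i j : Fin n) :
    e i j = 0 ∧ hSum e i j = 1 ∧ vSum e i j = 1 ∨ e i j = 2 ∧ hSum e i j = 0 ∧ vSum e i j = 0 ∨
      e i j = 1 := by
  have h := hA.edges i j
  have h1 := ((isASM_iff e).1 hA).1 i j
  have h2 := ((isASM_iff e).1 hA).2.1 i j
  rcases stepVal_cases (e i j) with ⟨h0, h3⟩ | ⟨h0, h3⟩ | ⟨h0, h3⟩ <;> rw [h3] at h1 h2 <;>
    simp only [h0] <;> simp <;> omega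

lemma nuASM_eq {e : Fin n → Fin n → Fin 3} (hA : IsASM (asmMat e)) :
    nuASM (asmMat e) =
      ∑ i, ∑ j, if e i j = 1 ∧ hSum e i j = 0 ∧ vSum e i j = 0 then 1 else 0 := by
  obtain ⟨-, -, hr, hc⟩ := (isASM_iff e).1 hA
  have hlow : ∀ i j, ∑ k, (if j ≤ k then stepVal (e i k) else 0) = 1 - hSum e i j := by
    intro i j
    rw [eq_sub_iff_add_eq, ← hr i, hSum, prefixSum]
    have : ∑ k ∈ Iio j, stepVal (e i k) = ∑ k, if k < j then stepVal (e i k) else 0 := by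
      rw [← Finset.sum_filter]
      congr 1
      ext k; simp
    rw [this, ← Finset.sum_add_distrib]
    refine Finset.sum_congr rfl fun k _ => ?_
    by_cases h : k < j
    · simp [h, not_le.2 h]
    · simp [h, not_lt.1 h]
  have hup : ∀ i j, ∑ k, (if i < k then stepVal (e k j) else 0) =
      1 - vSum e i j - stepVal (e i j) := by
    intro i j
    rw [sub_sub, eq_sub_iff_add_eq, ← hc j, vSum,
      ← sum_filter_le_eq (fun k => stepVal (e k j)) i, Finset.sum_filter,
      ← Finset.sum_add_distrib]
    refine Finset.sum_congr rfl fun k _ => ?_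
    by_cases h : i < k
    · simp [h, not_le.2 h]
    · simp [h, not_lt.1 h]
  have hsum : (∑ i : Fin n, ∑ i' : Fin n, ∑ j : Fin n, ∑ j' : Fin n,
      if i < i' ∧ j' ≤ j then asmMat e i j * asmMat e i' j' else 0) =
      ((∑ i, ∑ j, if e i j = 1 ∧ hSum e i j = 0 ∧ vSum e i j = 0 then 1 else 0 : ℕ) : ℤ) := by
    push_cast
    refine Finset.sum_congr rfl fun i _ => ?_
    have : ∀ i' j j', (if i < i' ∧ j' ≤ j then asmMat e i j * asmMat e i' j' else 0) =
        (if j' ≤ j then stepVal (e i j) else 0) * (if i < i' then stepVal (e i' j') else 0) := by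
      intro i' j j'
      by_cases h1 : i < i' <;> by_cases h2 : j' ≤ j <;> simp [h1, h2]
      rfl
    simp only [this]
    have hswap : ∀ i', ∑ j, ∑ j', (if j' ≤ j then stepVal (e i j) else 0) *
        (if i < i' then stepVal (e i' j') else 0) =
        ∑ j', (∑ j, if j' ≤ j then stepVal (e i j) else 0) *
          (if i < i' then stepVal (e i' j') else 0) := by
      intro i'
      rw [Finset.sum_comm]
      simp only [Finset.sum_mul]
    simp only [hswap]
    rw [Finset.sum_comm]
    refine Finset.sum_congr rfl fun j _ => ?_
    rw [← Finset.mul_sum, hlow, hup]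
    have h := hA.edges i j
    rcases hA.entry_cases i j with ⟨h1, h2, h3⟩ | ⟨h1, h2, h3⟩ | h1
    · simp [h1, h2, h3]
    · simp [h1, h2, h3, stepVal]
    · rcases h with ⟨h2 | h2, h3 | h3⟩ <;> simp [h1, h2, h3, stepVal]
  rw [nuASM, hsum, Int.toNat_natCast]

lemma muASM_eq (e : Fin n → Fin n → Fin 3) :
    muASM (asmMat e) = ∑ i, ∑ j, if e i j = 0 then 1 else 0 := by
  have h : ∀ i j, asmMat e i j = -1 ↔ e i j = 0 := by
    intro i j
    have : asmMat e i j = stepVal (e i j) := rfl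
    rw [this]
    rcases stepVal_cases (e i j) with ⟨h, h'⟩ | ⟨h, h'⟩ | ⟨h, h'⟩ <;> rw [h', h] <;> simp
  rw [muASM, Finset.card_filter, ← Finset.univ_product_univ, Finset.sum_product]
  simp only [h]

lemma asmMat_top {e : Fin (n + 1) → Fin (n + 1) → Fin 3} (hA : IsASM (asmMat e)) :
    ∃ k, asmMat e 0 = fun j => if j = k then 1 else 0 := by
  obtain ⟨-, hv, hr, -⟩ := (isASM_iff e).1 hA
  refine exists_eq_indicator _ (fun j => ?_) (hr 0)
  have := hv 0 j
  rwa [vSum, prefixSum_zero, zero_add] at this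

lemma asmMat_left {e : Fin (n + 1) → Fin (n + 1) → Fin 3} (hA : IsASM (asmMat e)) :
    ∃ k, (fun i => asmMat e i 0) = fun i => if i = k then 1 else 0 := by
  obtain ⟨hh, -, -, hc⟩ := (isASM_iff e).1 hA
  refine exists_eq_indicator _ (fun i => ?_) (hc 0)
  have := hh i 0
  rwa [hSum, prefixSum_zero, zero_add] at this

lemma asmMat_bottom {e : Fin (n + 1) → Fin (n + 1) → Fin 3} (hA : IsASM (asmMat e)) :
    ∃ k, asmMat e (Fin.last n) = fun j => if j = k then 1 else 0 := by
  obtain ⟨-, -, hr, hc⟩ := (isASM_iff e).1 hA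
  refine exists_eq_indicator _ (fun j => ?_) (hr (Fin.last n))
  have h1 : prefixSum (fun k => stepVal (e k j)) (Fin.last n) + asmMat e (Fin.last n) j = 1 :=
    (prefixSum_last _).trans (hc j)
  have h2 : prefixSum (fun k => stepVal (e k j)) (Fin.last n) = 0 ∨
    prefixSum (fun k => stepVal (e k j)) (Fin.last n) = 1 := (hA.edges (Fin.last n) j).2
  omega

lemma asmMat_right {e : Fin (n + 1) → Fin (n + 1) → Fin 3} (hA : IsASM (asmMat e)) :
    ∃ k, (fun i => asmMat e i (Fin.last n)) = fun i => if i = k then 1 else 0 := by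
  obtain ⟨-, -, hr, hc⟩ := (isASM_iff e).1 hA
  refine exists_eq_indicator _ (fun i => ?_) (hc (Fin.last n))
  have h1 : prefixSum (fun k => stepVal (e i k)) (Fin.last n) + asmMat e i (Fin.last n) = 1 :=
    (prefixSum_last _).trans (hr i)
  have h2 : prefixSum (fun k => stepVal (e i k)) (Fin.last n) = 0 ∨
    prefixSum (fun k => stepVal (e i k)) (Fin.last n) = 1 := (hA.edges i (Fin.last n)).1
  omega

lemma card_zeros_before {u : Fin n → ℤ} {k : Fin n} (h : u = fun j => if j = k then 1 else 0) :
    (univ.filter fun j : Fin n => u j = 0 ∧ ∃ j', j < j' ∧ u j' = 1).card = k := by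
  have : (univ.filter fun j : Fin n => u j = 0 ∧ ∃ j', j < j' ∧ u j' = 1) = Iio k := by
    ext j
    simpa [h] using fun h : j < k => h.ne
  rw [this, Fin.card_Iio]

lemma card_zeros_after {u : Fin n → ℤ} {k : Fin n} (h : u = fun j => if j = k then 1 else 0) :
    (univ.filter fun j : Fin n => u j = 0 ∧ ∃ j', j' < j ∧ u j' = 1).card = n - 1 - k := by
  have : (univ.filter fun j : Fin n => u j = 0 ∧ ∃ j', j' < j ∧ u j' = 1) = Ioi k := by
    ext j
    simpa [h] using fun h : k < j => h.ne'
  rw [this, Fin.card_Ioi]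

variable {A : Fin (n + 1) → Fin (n + 1) → ℤ} {k : Fin (n + 1)}

lemma rhoT_eq (h : A 0 = fun j => if j = k then 1 else 0) : rhoT A = k :=
  card_zeros_before h

lemma rhoL_eq (h : (fun i => A i 0) = fun i => if i = k then 1 else 0) : rhoL A = k :=
  card_zeros_before h

lemma rhoB_eq (h : A (Fin.last n) = fun j => if j = k then 1 else 0) : rhoB A = n - k :=
  card_zeros_after h

lemma rhoR_eq (h : (fun i => A i (Fin.last n)) = fun i => if i = k then 1 else 0) :
    rhoR A = n - k :=
  card_zeros_after h

lemma cornerTL_eq (A : Fin (n + 1) → Fin (n + 1) → ℤ) : cornerTL A = (A 0 0).toNat := by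
  simp [cornerTL]

lemma cornerTR_eq (A : Fin (n + 1) → Fin (n + 1) → ℤ) :
    cornerTR A = (A 0 (Fin.last n)).toNat := by
  simp [cornerTR]; rfl

lemma cornerBR_eq (A : Fin (n + 1) → Fin (n + 1) → ℤ) :
    cornerBR A = (A (Fin.last n) (Fin.last n)).toNat := by
  simp [cornerBR]; rfl

lemma cornerBL_eq (A : Fin (n + 1) → Fin (n + 1) → ℤ) :
    cornerBL A = (A (Fin.last n) 0).toNat := by
  simp [cornerBL]; rfl

end BoundaryStatistics

section WeightFactorization

variable {S : Type*} [CommRing S]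

/-- The part of a vertex weight which remains after the powers of `x` and `y` recording inversions
and negative entries have been split off. -/
def coreWeight (x y z w : S) (h v : ℤ) (e : Fin 3) : S :=
  if e = 1 then
    if h = v then y * z * w - (z - 1) * (w - 1) else y - x * (z - 1) * (w - 1)
  else y

lemma vertexWeight_eq_coreWeight {n : ℕ} {e : Fin n → Fin n → Fin 3} (hA : IsASM (asmMat e))
    (i j : Fin n) (x y z w : S) (hneg : e i j = 0 → z = 1 ∧ w = 1) :
    vertexWeight x y z w (hSum e i j) (vSum e i j) (e i j) =
      x ^ (if e i j = 1 ∧ hSum e i j = 0 ∧ vSum e i j = 0 then 1 else 0) *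
        y ^ (if e i j = 0 then 1 else 0) *
        coreWeight x y z w (hSum e i j) (vSum e i j) (e i j) := by
  rcases hA.entry_cases i j with ⟨h1, h2, h3⟩ | ⟨h1, h2, h3⟩ | h1
  · obtain ⟨rfl, rfl⟩ := hneg h1
    simp [h1, h2, h3, vertexWeight, coreWeight, cWeight]
  · simp [h1, h2, h3, vertexWeight, coreWeight]
  · rcases hA.edges i j with ⟨h2 | h2, h3 | h3⟩ <;>
      simp [h1, h2, h3, vertexWeight, coreWeight]

lemma coreWeight_of_indicator (x y z w : S) (h v : ℤ) (e : Fin 3) (c d : Prop) [Decidable c]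
    [Decidable d] (he : stepVal e = if c then 1 else 0) (hd : ¬c → (h = v ↔ d)) :
    coreWeight x y z w h v e =
      if c then y else if d then y * z * w - (z - 1) * (w - 1) else y - x * (z - 1) * (w - 1) := by
  by_cases hc : c
  · rcases stepVal_cases e with ⟨h1, h2⟩ | ⟨h1, h2⟩ | ⟨h1, h2⟩ <;> rw [h2] at he <;>
      simp [hc, h1, coreWeight] at he ⊢
  · rcases stepVal_cases e with ⟨h1, h2⟩ | ⟨h1, h2⟩ | ⟨h1, h2⟩ <;> rw [h2] at he <;>
      simp [hc, h1, coreWeight, hd hc] at he ⊢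

section Edges

variable {n : ℕ} {e : Fin (n + 1) → Fin (n + 1) → Fin 3} {k : Fin (n + 1)} (x y z w : S)

lemma coreWeight_top (h : asmMat e 0 = fun j => if j = k then 1 else 0) (j : Fin (n + 1)) :
    coreWeight x y z w (hSum e 0 j) (vSum e 0 j) (e 0 j) =
      if j = k then y else if j < k then y * z * w - (z - 1) * (w - 1)
        else y - x * (z - 1) * (w - 1) := by
  refine coreWeight_of_indicator x y z w _ _ _ _ _ (congrFun h j) fun hj => ?_
  have h1 : hSum e 0 j = if k < j then 1 else 0 := by
    rw [← prefixSum_indicator, ← h]; rfl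
  have h2 : vSum e 0 j = 0 := prefixSum_zero _
  rw [h1, h2]
  rcases lt_or_gt_of_ne hj with h | h <;> simp [h, h.not_gt]

lemma coreWeight_left (h : (fun i => asmMat e i 0) = fun i => if i = k then 1 else 0)
    (i : Fin (n + 1)) :
    coreWeight x y z w (hSum e i 0) (vSum e i 0) (e i 0) =
      if i = k then y else if i < k then y * z * w - (z - 1) * (w - 1)
        else y - x * (z - 1) * (w - 1) := by
  refine coreWeight_of_indicator x y z w _ _ _ _ _ (congrFun h i) fun hi => ?_
  have h1 : vSum e i 0 = if k < i then 1 else 0 := by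
    rw [← prefixSum_indicator, ← h]; rfl
  have h2 : hSum e i 0 = 0 := prefixSum_zero _
  rw [h1, h2]
  rcases lt_or_gt_of_ne hi with h | h <;> simp [h, h.not_gt]

lemma coreWeight_bottom (hA : IsASM (asmMat e))
    (h : asmMat e (Fin.last n) = fun j => if j = k then 1 else 0) (j : Fin (n + 1)) :
    coreWeight x y z w (hSum e (Fin.last n) j) (vSum e (Fin.last n) j) (e (Fin.last n) j) =
      if j = k then y else if k < j then y * z * w - (z - 1) * (w - 1)
        else y - x * (z - 1) * (w - 1) := by
  refine coreWeight_of_indicator x y z w _ _ _ _ _ (congrFun h j) fun hj => ?_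
  have h1 : hSum e (Fin.last n) j = if k < j then 1 else 0 := by
    rw [← prefixSum_indicator, ← h]; rfl
  have h2 : vSum e (Fin.last n) j + asmMat e (Fin.last n) j = 1 :=
    (prefixSum_last _).trans (((isASM_iff e).1 hA).2.2.2 j)
  rw [h] at h2
  simp only [hj, if_false, add_zero] at h2
  rw [h1, h2]
  rcases lt_or_gt_of_ne hj with h | h <;> simp [h, h.not_gt]

lemma coreWeight_right (hA : IsASM (asmMat e))
    (h : (fun i => asmMat e i (Fin.last n)) = fun i => if i = k then 1 else 0)
    (i : Fin (n + 1)) :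
    coreWeight x y z w (hSum e i (Fin.last n)) (vSum e i (Fin.last n)) (e i (Fin.last n)) =
      if i = k then y else if k < i then y * z * w - (z - 1) * (w - 1)
        else y - x * (z - 1) * (w - 1) := by
  refine coreWeight_of_indicator x y z w _ _ _ _ _ (congrFun h i) fun hi => ?_
  have h1 : vSum e i (Fin.last n) = if k < i then 1 else 0 := by
    rw [← prefixSum_indicator, ← h]; rfl
  have h2 : hSum e i (Fin.last n) + asmMat e i (Fin.last n) = 1 :=
    (prefixSum_last _).trans (((isASM_iff e).1 hA).2.2.1 i)
  rw [show asmMat e i (Fin.last n) = _ from congrFun h i] at h2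
  simp only [hi, if_false, add_zero] at h2
  rw [h1, h2]
  rcases lt_or_gt_of_ne hi with h | h <;> simp [h, h.not_gt]

end Edges

lemma prod_ite_lt {m : ℕ} (z : S) (k : ℕ) :
    ∏ j : Fin m, (if (j : ℕ) + 1 < k then z else 1) = z ^ min m (k - 1) := by
  induction m with
  | zero => simp
  | succ m ih =>
    rw [Fin.prod_univ_castSucc]
    simp only [Fin.val_castSucc, Fin.val_last, ih]
    split_ifs with h
    · rw [← pow_succ]
      congr 1
      omega
    · rw [mul_one]
      congr 1
      omega

lemma prod_ite_gt {m : ℕ} (z : S) (k : ℕ) :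
    ∏ j : Fin m, (if k < (j : ℕ) + 1 then z else 1) = z ^ (m - k) := by
  induction m with
  | zero => simp
  | succ m ih =>
    rw [Fin.prod_univ_castSucc]
    simp only [Fin.val_castSucc, Fin.val_last, ih]
    split_ifs with h
    · rw [← pow_succ]
      congr 1
      omega
    · rw [mul_one]
      congr 1
      omega

lemma prod_edge_before {m : ℕ} (y z : S) (k : Fin (m + 2)) :
    ∏ j : Fin m, (if j.succ.castSucc = k then y else if j.succ.castSucc < k then y * z else y) =
      y ^ m * z ^ ((k : ℕ) - 1) := by
  have h : ∀ j : Fin m, (if j.succ.castSucc = k then y else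
      if j.succ.castSucc < k then y * z else y) = y * if (j : ℕ) + 1 < k then z else 1 := by
    intro j
    simp only [Fin.ext_iff, Fin.lt_def, Fin.val_castSucc, Fin.val_succ]
    split_ifs <;> first | omega | simp
  simp only [h]
  rw [Finset.prod_mul_distrib, prod_ite_lt, Finset.prod_const, Finset.card_univ,
    Fintype.card_fin, min_eq_right (by omega)]

lemma prod_edge_after {m : ℕ} (y z : S) (k : Fin (m + 2)) :
    ∏ j : Fin m, (if j.succ.castSucc = k then y else if k < j.succ.castSucc then y * z else y) =
      y ^ m * z ^ (m - (k : ℕ)) := by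
  have h : ∀ j : Fin m, (if j.succ.castSucc = k then y else
      if k < j.succ.castSucc then y * z else y) = y * if (k : ℕ) < (j : ℕ) + 1 then z else 1 := by
    intro j
    simp only [Fin.ext_iff, Fin.lt_def, Fin.val_castSucc, Fin.val_succ]
    split_ifs <;> first | omega | simp
  simp only [h]
  rw [Finset.prod_mul_distrib, prod_ite_gt, Finset.prod_const, Finset.card_univ,
    Fintype.card_fin]

lemma prod_univ_first_last {m : ℕ} (f : Fin (m + 2) → S) :
    ∏ i, f i = f 0 * (∏ i : Fin m, f i.succ.castSucc) * f (Fin.last (m + 1)) := by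
  rw [Fin.prod_univ_castSucc, Fin.prod_univ_succ]
  rfl

lemma boundaryParams_zero {m : ℕ} (p q : S) : boundaryParams p q (0 : Fin (m + 2)) = p := by
  simp [boundaryParams]

lemma boundaryParams_last {m : ℕ} (p q : S) :
    boundaryParams p q (Fin.last (m + 1)) = q := by
  simp [boundaryParams]

lemma boundaryParams_of_ne {m : ℕ} (p q : S) {i : Fin (m + 2)} (h0 : i ≠ 0)
    (hl : i ≠ Fin.last (m + 1)) : boundaryParams p q i = 1 := by
  simp [boundaryParams, h0, hl]

lemma boundaryParams_interior {m : ℕ} (p q : S) (i : Fin m) :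
    boundaryParams p q i.succ.castSucc = 1 := by
  refine boundaryParams_of_ne p q (by simp [Fin.ext_iff]) ?_
  simp only [ne_eq, Fin.ext_iff, Fin.val_castSucc, Fin.val_succ, Fin.val_last]
  omega

lemma ite_eq_pow (c : Prop) [Decidable c] (t : ℤ) (ht : t = if c then 1 else 0) (y b : S) :
    (if c then y else b) = y ^ t.toNat * b ^ (1 - t.toNat) := by
  subst ht
  split_ifs <;> simp

lemma prod_vertexWeight {m : ℕ} {e : Fin (m + 2) → Fin (m + 2) → Fin 3}
    (hA : IsASM (asmMat e)) (x y : S) (z1 z2 z3 z4 : S) :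
    ∏ i, ∏ j, vertexWeight x y (boundaryParams z1 z3 i) (boundaryParams z4 z2 j)
        (hSum e i j) (vSum e i j) (e i j) =
      x ^ nuASM (asmMat e) * y ^ muASM (asmMat e) *
        ∏ i, ∏ j, coreWeight x y (boundaryParams z1 z3 i) (boundaryParams z4 z2 j)
          (hSum e i j) (vSum e i j) (e i j) := by
  obtain ⟨k1, h1⟩ := asmMat_top hA
  obtain ⟨k2, h2⟩ := asmMat_right hA
  obtain ⟨k3, h3⟩ := asmMat_bottom hA
  obtain ⟨k4, h4⟩ := asmMat_left hA
  have hneg : ∀ i j, e i j = 0 →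
      (boundaryParams z1 z3 i : S) = 1 ∧ (boundaryParams z4 z2 j : S) = 1 := by
    intro i j hij
    have hm : asmMat e i j = -1 := by simp [asmMat, hij]
    refine ⟨boundaryParams_of_ne _ _ ?_ ?_, boundaryParams_of_ne _ _ ?_ ?_⟩ <;> rintro rfl
    · rw [h1] at hm
      grind
    · rw [h3] at hm
      grind
    · rw [show asmMat e i 0 = _ from congrFun h4 i] at hm
      grind
    · rw [show asmMat e i (Fin.last _) = _ from congrFun h2 i] at hm
      grind
  have hcell : ∀ i j, _ := fun i j => vertexWeight_eq_coreWeight hA i j x y _ _ (hneg i j)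
  simp only [hcell, Finset.prod_mul_distrib, Finset.prod_pow_eq_pow_sum]
  rw [nuASM_eq hA, muASM_eq]

lemma coreWeight_interior (x y : S) (h v : ℤ) (e : Fin 3) :
    coreWeight x y 1 1 h v e = y := by
  simp [coreWeight]

lemma term_mul_pow_eq {m : ℕ} {e : Fin (m + 2) → Fin (m + 2) → Fin 3}
    (hA : IsASM (asmMat e)) (x y : S) (z1 z2 z3 z4 : S) :
    x ^ nuASM (asmMat e) *
      y ^ (muASM (asmMat e) + cornerTL (asmMat e) + cornerTR (asmMat e) +
            cornerBR (asmMat e) + cornerBL (asmMat e)) *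
      z1 ^ (rhoT (asmMat e) + cornerTL (asmMat e) - 1) *
      z2 ^ (rhoR (asmMat e) + cornerBR (asmMat e) - 1) *
      z3 ^ (rhoB (asmMat e) + cornerBR (asmMat e) - 1) *
      z4 ^ (rhoL (asmMat e) + cornerTL (asmMat e) - 1) *
      (y * z4 * z1 - (z4 - 1) * (z1 - 1)) ^ (1 - cornerTL (asmMat e)) *
      (y - x * (z1 - 1) * (z2 - 1)) ^ (1 - cornerTR (asmMat e)) *
      (y * z2 * z3 - (z2 - 1) * (z3 - 1)) ^ (1 - cornerBR (asmMat e)) *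
      (y - x * (z3 - 1) * (z4 - 1)) ^ (1 - cornerBL (asmMat e)) * y ^ (m * m + 4 * m) =
    ∏ i, ∏ j, vertexWeight x y (boundaryParams z1 z3 i) (boundaryParams z4 z2 j)
        (hSum e i j) (vSum e i j) (e i j) := by
  rw [prod_vertexWeight hA]
  obtain ⟨k1, h1⟩ := asmMat_top hA
  obtain ⟨k2, h2⟩ := asmMat_right hA
  obtain ⟨k3, h3⟩ := asmMat_bottom hA
  obtain ⟨k4, h4⟩ := asmMat_left hA
  have hTL : rhoT (asmMat e) + cornerTL (asmMat e) - 1 = (k1 : ℕ) - 1 := by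
    rw [rhoT_eq h1, cornerTL_eq, show asmMat e 0 0 = _ from congrFun h1 0]
    split_ifs with h
    · simp [← h]
    · simp
  have hTL' : rhoL (asmMat e) + cornerTL (asmMat e) - 1 = (k4 : ℕ) - 1 := by
    rw [rhoL_eq h4, cornerTL_eq, show asmMat e 0 0 = _ from congrFun h4 0]
    split_ifs with h
    · simp [← h]
    · simp
  have hBR : rhoB (asmMat e) + cornerBR (asmMat e) - 1 = m - (k3 : ℕ) := by
    rw [rhoB_eq h3, cornerBR_eq, show asmMat e _ _ = _ from congrFun h3 (Fin.last (m + 1))]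
    split_ifs with h
    · simp [← h]
    · simp only [Int.toNat_zero]; omega
  have hBR' : rhoR (asmMat e) + cornerBR (asmMat e) - 1 = m - (k2 : ℕ) := by
    rw [rhoR_eq h2, cornerBR_eq, show asmMat e _ _ = _ from congrFun h2 (Fin.last (m + 1))]
    split_ifs with h
    · simp [← h]
    · simp only [Int.toNat_zero]; omega
  have hrow := fun i => prod_univ_first_last fun j =>
    coreWeight x y (boundaryParams z1 z3 i) (boundaryParams z4 z2 j) (hSum e i j) (vSum e i j)
      (e i j)
  rw [hTL, hTL', hBR, hBR']
  simp only [hrow]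
  rw [prod_univ_first_last]
  simp only [boundaryParams_zero, boundaryParams_last, boundaryParams_interior,
    coreWeight_interior, coreWeight_top x y _ _ h1, coreWeight_bottom x y _ _ hA h3]
  simp only [coreWeight_left x y _ _ h4, coreWeight_right x y _ _ hA h2,
    Finset.prod_mul_distrib, sub_self, zero_mul, mul_zero, sub_zero, mul_one,
    prod_edge_before, prod_edge_after, Finset.prod_const, Finset.card_univ, Fintype.card_fin,
    Fin.not_lt_zero, (Fin.le_last _).not_gt, if_false]
  have cTL : (if 0 = k1 then y else if 0 < k1 then y * z1 * z4 - (z1 - 1) * (z4 - 1)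
      else y - x * (z1 - 1) * (z4 - 1)) = y ^ cornerTL (asmMat e) *
        (y * z4 * z1 - (z4 - 1) * (z1 - 1)) ^ (1 - cornerTL (asmMat e)) := by
    rw [cornerTL_eq, ← ite_eq_pow (0 = k1) _ (congrFun h1 0)]
    refine if_ctx_congr Iff.rfl (fun _ => rfl) fun h => ?_
    rw [if_pos (Fin.pos_of_ne_zero (Ne.symm h))]
    ring
  have cTR : (if Fin.last (m + 1) = k1 then y else y - x * (z1 - 1) * (z2 - 1)) =
      y ^ cornerTR (asmMat e) * (y - x * (z1 - 1) * (z2 - 1)) ^ (1 - cornerTR (asmMat e)) := by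
    rw [cornerTR_eq, ← ite_eq_pow (Fin.last (m + 1) = k1) _ (congrFun h1 (Fin.last (m + 1)))]
  have cBL : (if 0 = k3 then y else y - x * (z3 - 1) * (z4 - 1)) =
      y ^ cornerBL (asmMat e) * (y - x * (z3 - 1) * (z4 - 1)) ^ (1 - cornerBL (asmMat e)) := by
    rw [cornerBL_eq, ← ite_eq_pow (0 = k3) _ (congrFun h3 0)]
  have cBR : (if Fin.last (m + 1) = k3 then y else if k3 < Fin.last (m + 1) then
      y * z3 * z2 - (z3 - 1) * (z2 - 1) else y - x * (z3 - 1) * (z2 - 1)) =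
      y ^ cornerBR (asmMat e) *
        (y * z2 * z3 - (z2 - 1) * (z3 - 1)) ^ (1 - cornerBR (asmMat e)) := by
    rw [cornerBR_eq, ← ite_eq_pow (Fin.last (m + 1) = k3) _ (congrFun h3 (Fin.last (m + 1)))]
    refine if_ctx_congr Iff.rfl (fun _ => rfl) fun h => ?_
    rw [if_pos (lt_of_le_of_ne (Fin.le_last _) (Ne.symm h))]
    ring
  rw [cTL, cTR, cBL, cBR]
  ring

lemma Ypoly_mul_pow {m : ℕ} (x y z1 z2 z3 z4 : S) :
    Ypoly (m + 2) x y z1 z2 z3 z4 * y ^ (m * m + 4 * m) =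
      asmSum x y (boundaryParams z1 z3 : Fin (m + 2) → S) (boundaryParams z4 z2) := by
  rw [Ypoly, asmSum, Finset.sum_mul]
  refine Finset.sum_congr rfl fun e _ => ?_
  rw [ite_mul, zero_mul]
  split_ifs with hA
  · exact term_mul_pow_eq hA x y z1 z2 z3 z4
  · rfl

lemma Ypoly_one (x y z1 z2 z3 z4 : S) :
    Ypoly 1 x y z1 z2 z3 z4 = Ypoly 1 x y 1 1 1 1 := by
  rw [Ypoly, Ypoly]
  refine Finset.sum_congr rfl fun e _ => ?_
  split_ifs with hA
  · have h : ∀ i j, asmMat e i j = 1 := by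
      intro i j
      have := hA.2.2.2.1 i
      rwa [Fin.sum_univ_one, ← Subsingleton.elim j 0] at this
    simp [rhoT, rhoR, rhoB, rhoL, cornerTL, cornerTR, cornerBR, cornerBL, h]
  · rfl

lemma map_Ypoly {T : Type*} [CommRing T] (f : S →+* T) (n : ℕ) (x y z1 z2 z3 z4 : S) :
    f (Ypoly n x y z1 z2 z3 z4) = Ypoly n (f x) (f y) (f z1) (f z2) (f z3) (f z4) := by
  simp only [Ypoly, map_sum, apply_ite f, map_mul, map_pow, map_sub, map_one, map_zero]

end WeightFactorization

open MvPolynomial in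
lemma Ypoly_X_swap (m : ℕ) :
    Ypoly (m + 2) (X 0 : MvPolynomial (Fin 6) ℤ) (X 1) (X 2) (X 3) (X 4) (X 5) =
        Ypoly (m + 2) (X 0) (X 1) (X 4) (X 3) (X 2) (X 5) ∧
      Ypoly (m + 2) (X 0 : MvPolynomial (Fin 6) ℤ) (X 1) (X 2) (X 3) (X 4) (X 5) =
        Ypoly (m + 2) (X 0) (X 1) (X 2) (X 5) (X 4) (X 3) := by
  have hne : ∀ (i : Fin 6) (q : MvPolynomial (Fin 6) ℤ),
      X 0 * X i * q - (1 + X 0 - X 1) * X i + 1 ≠ 0 := by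
    intro i q h
    simpa using congrArg (constantCoeff (R := ℤ)) h
  have hy : (X 1 : MvPolynomial (Fin 6) ℤ) ^ (m * m + 4 * m) ≠ 0 := pow_ne_zero _ (X_ne_zero 1)
  constructor <;> refine mul_right_cancel₀ hy ?_ <;> rw [Ypoly_mul_pow, Ypoly_mul_pow]
  · exact asmSum_boundaryParams_swap _ _ _ _ _ (hne _ _) (hne _ _) (hne _ _)
  · rw [asmSum_symm, asmSum_symm _ _ (boundaryParams (X 2) (X 4))]
    exact asmSum_boundaryParams_swap _ _ _ _ _ (hne _ _) (hne _ _) (hne _ _)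

/-- Symmetry of `Y_n` under exchanging `z1 ↔ z3` and under exchanging
`z2 ↔ z4`, stated for all values of the variables in any commutative ring,
equivalently as identities of polynomials in `ℤ[x,y,z1,z2,z3,z4]`. -/
theorem stmt19 {R : Type*} [CommRing R] (x y z1 z2 z3 z4 : R) (n : ℕ) (hn : 1 ≤ n) :
    Ypoly n x y z1 z2 z3 z4 = Ypoly n x y z3 z2 z1 z4 ∧
      Ypoly n x y z1 z2 z3 z4 = Ypoly n x y z1 z4 z3 z2 := by
  obtain ⟨k, rfl⟩ : ∃ k, n = k + 1 := ⟨n - 1, by omega⟩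
  cases k with
  | zero =>
    constructor
    · rw [zero_add, Ypoly_one, Ypoly_one x y z3]
    · rw [zero_add, Ypoly_one, Ypoly_one x y z1 z4]
  | succ m =>
    have h := Ypoly_X_swap m
    let f : MvPolynomial (Fin 6) ℤ →+* R :=
      MvPolynomial.eval₂Hom (Int.castRingHom R) ![x, y, z1, z2, z3, z4]
    have h1 := congrArg f h.1
    have h2 := congrArg f h.2
    rw [map_Ypoly, map_Ypoly] at h1 h2
    simp only [f, MvPolynomial.coe_eval₂Hom, MvPolynomial.eval₂_X] at h1 h2
    exact ⟨h1, h2⟩
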